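/- For every arrival sequence S = (s_1, …, s_T) with all s_t ∈ (0,1]: (2/3)·THR(0)(S) + (1/3)·THR(1/2)(S) ≥ (1/3)·OPT⁺(S). That is, the randomized algorithm that applies the greedy policy with probability 2/3 and the threshold-1/2 policy with probability 1/3 is 1/3-competitive relative to the optimal fractional packing. -/

import Mathlib

open Set

/-- Value of the threshold policy `THR(τ)` on arrival sequence `S`;
`thrVal 0` is the greedy policy (all sizes are positive). -/
noncomputable def thrVal (τ : ℝ) (S : List ℝ) : ℝ :=
  S.foldl (fun acc s => if τ ≤ s ∧ acc + s ≤ 1 then acc + s else acc) 0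

/-!
If the items have total size at most `1`, greedy is optimal. Otherwise let `s` be the first item
that overflows the knapsack and `A` the items before it, all of which greedy packs. If `A` contains
an item of size at least `1/2`, or if `s < 1/2`, then `A` already has total size at least `1/2`, so
twice the greedy value is at least `1`. If neither holds, `s` is the first item that the
threshold-`1/2` policy accepts, and the two policies together pack at least `A.sum + s > 1`.
-/

theorem exists_eq_append_cons_sum_le_lt {M : Type*} [AddMonoid M] [LinearOrder M]
    {S : List M} {c : M} (hc : 0 ≤ c) (hS : c < S.sum) :
    ∃ A s B, S = A ++ s :: B ∧ A.sum ≤ c ∧ c < A.sum + s := by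
  induction S using List.reverseRecOn with
  | nil => exact absurd hS hc.not_gt
  | append_singleton S s ih =>
    rcases le_or_gt S.sum c with hle | hlt
    · exact ⟨S, s, [], rfl, hle, by simpa only [List.sum_append, List.sum_singleton] using hS⟩
    · obtain ⟨A, t, B, rfl, hA, ht⟩ := ih hlt
      exact ⟨A, t, B ++ [s], by simp only [List.append_assoc, List.cons_append], hA, ht⟩

section ThresholdPolicy

variable {τ : ℝ} {S : List ℝ}

theorem thrVal_nil (τ : ℝ) : thrVal τ [] = 0 := rfl

theorem thrVal_append_singleton (τ : ℝ) (S : List ℝ) (s : ℝ) :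
    thrVal τ (S ++ [s]) =
      if τ ≤ s ∧ thrVal τ S + s ≤ 1 then thrVal τ S + s else thrVal τ S :=
  List.foldl_append

theorem thrVal_le_thrVal_append (τ : ℝ) (S : List ℝ) {T : List ℝ} (hT : ∀ t ∈ T, 0 ≤ t) :
    thrVal τ S ≤ thrVal τ (S ++ T) := by
  induction T using List.reverseRecOn with
  | nil => rw [List.append_nil]
  | append_singleton T t ih =>
    obtain ⟨hT, ht⟩ := List.forall_mem_append.1 hT
    have ht : 0 ≤ t := ht t (List.mem_singleton_self t)
    rw [← List.append_assoc, thrVal_append_singleton]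
    split_ifs <;> linarith [ih hT]

theorem thrVal_nonneg (τ : ℝ) (hS : ∀ s ∈ S, 0 ≤ s) : 0 ≤ thrVal τ S :=
  thrVal_le_thrVal_append τ [] hS

theorem thrVal_eq_zero_of_forall_lt (hS : ∀ s ∈ S, s < τ) : thrVal τ S = 0 := by
  induction S using List.reverseRecOn with
  | nil => exact thrVal_nil τ
  | append_singleton S s ih =>
    obtain ⟨hS, hs⟩ := List.forall_mem_append.1 hS
    have hs : s < τ := hs s (List.mem_singleton_self s)
    rw [thrVal_append_singleton, if_neg fun h => hs.not_ge h.1, ih hS]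

theorem thrVal_append_singleton_eq_of_forall_lt {s : ℝ} (hS : ∀ x ∈ S, x < τ) (hτs : τ ≤ s)
    (hs : s ≤ 1) : thrVal τ (S ++ [s]) = s := by
  rw [thrVal_append_singleton, thrVal_eq_zero_of_forall_lt hS, zero_add, if_pos ⟨hτs, hs⟩]

theorem thrVal_eq_sum (hτ : 0 ≤ τ) (hS : ∀ s ∈ S, τ ≤ s) (hsum : S.sum ≤ 1) :
    thrVal τ S = S.sum := by
  induction S using List.reverseRecOn with
  | nil => exact thrVal_nil τ
  | append_singleton S s ih =>
    obtain ⟨hS, hs⟩ := List.forall_mem_append.1 hS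
    have hs : τ ≤ s := hs s (List.mem_singleton_self s)
    rw [List.sum_append, List.sum_singleton] at hsum ⊢
    rw [thrVal_append_singleton, ih hS (by linarith), if_pos ⟨hs, hsum⟩]

theorem min_le_thrVal_zero_or_one_lt_add (τ : ℝ) (hS : ∀ s ∈ S, s ∈ Icc (0 : ℝ) 1)
    (hsum : 1 < S.sum) :
    min τ (1 - τ) ≤ thrVal 0 S ∨ 1 < thrVal 0 S + thrVal τ S := by
  obtain ⟨A, s, B, rfl, hA, hs⟩ := exists_eq_append_cons_sum_le_lt zero_le_one hsum
  obtain ⟨hAmem, hsBmem⟩ := List.forall_mem_append.1 hS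
  obtain ⟨⟨-, hs1⟩, hBmem⟩ := List.forall_mem_cons.1 hsBmem
  have hA0 : ∀ x ∈ A, 0 ≤ x := fun x hx => (hAmem x hx).1
  have greedy_ge : A.sum ≤ thrVal 0 (A ++ s :: B) :=
    (thrVal_eq_sum le_rfl hA0 hA).symm.trans_le
      (thrVal_le_thrVal_append 0 A fun x hx => (hsBmem x hx).1)
  by_cases hlarge : ∃ x ∈ A, τ ≤ x
  · obtain ⟨x, hxA, hτx⟩ := hlarge
    have hxsum : x ≤ A.sum := List.single_le_sum hA0 x hxA
    exact .inl <| min_le_of_left_le <| hτx.trans <| hxsum.trans greedy_ge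
  push Not at hlarge
  rcases lt_or_ge s τ with hsτ | hτs
  · exact .inl <| min_le_of_right_le <| by linarith
  · have threshold_ge : s ≤ thrVal τ (A ++ s :: B) := by
      rw [List.append_cons]
      exact (thrVal_append_singleton_eq_of_forall_lt hlarge hτs hs1).symm.trans_le
        (thrVal_le_thrVal_append τ (A ++ [s]) fun x hx => (hBmem x hx).1)
    exact .inr <| by linarith

end ThresholdPolicy

/-- The randomized algorithm that runs greedy with probability 2/3 and the
threshold-1/2 policy with probability 1/3 is 1/3-competitive relative to the
optimal fractional packing `OPT⁺(S) = min{Σ_t s_t, 1}`. -/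
theorem thm_one_third_competitive
    (S : List ℝ) (hS : ∀ s ∈ S, s ∈ Ioc (0:ℝ) 1) :
    (1/3) * min S.sum 1 ≤ (2/3) * thrVal 0 S + (1/3) * thrVal (1/2) S := by
  have hpos : ∀ s ∈ S, 0 ≤ s := fun s hs => (hS s hs).1.le
  have greedy_nonneg : 0 ≤ thrVal 0 S := thrVal_nonneg 0 hpos
  have threshold_nonneg : 0 ≤ thrVal (1/2) S := thrVal_nonneg (1/2) hpos
  rcases le_or_gt S.sum 1 with hsum | hsum
  · rw [min_eq_left hsum, ← thrVal_eq_sum le_rfl hpos hsum]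
    linarith
  · rw [min_eq_right hsum.le]
    rcases min_le_thrVal_zero_or_one_lt_add (1/2) (fun s hs => Ioc_subset_Icc_self (hS s hs)) hsum
      with half_le | one_lt
    · rw [sub_half, min_self] at half_le
      linarith
    · linarith
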